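/- Let α, β, γ be real numbers and n ≥ 3 an integer. Then the set of values of the permanent on Λ̂_n(α,β,γ) equals the set of all products a(α,β,γ;n_1)·a(α,β,γ;n_2)⋯a(α,β,γ;n_m), where {n_1,…,n_m} ranges over all partitions of n with parts ≥ 3. -/

import Mathlib

open Matrix

/-- `Λ̂_n(α,β,γ)`: matrices `α·Sᵀ + β·I + γ·S` where `S` is the permutation matrix of a
permutation of `{1,…,n}` all of whose cycles have length at least 3 (note `Sᵀ = S⁻¹`). -/
def LambdaHat (n : ℕ) (α β γ : ℝ) : Set (Matrix (Fin n) (Fin n) ℝ) :=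
  {A | ∃ s : Equiv.Perm (Fin n), (∀ x, s x ≠ x ∧ s (s x) ≠ x) ∧
    A = α • ((s⁻¹).permMatrix ℝ) + β • (1 : Matrix (Fin n) (Fin n) ℝ) + γ • (s.permMatrix ℝ)}

/-!
Up to simultaneous relabelling of rows and columns, which preserves the permanent, the matrix
`α·S⁻¹ + β·1 + γ·S` depends only on the cycle type of the permutation. A permutation without fixed
points may therefore be replaced by a direct sum of rotations, which makes the matrix block diagonal
and the permanent a product over the cycles. For a single cycle of length `p ≥ 3` the matrix is
tridiagonal Toeplitz apart from its two corner entries. Laplace expansion along the first row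
expresses its permanent through those of tridiagonal Toeplitz matrices plus `α ^ p + γ ^ p`, and the
two-term recursion of the latter turns into the recursion defining `a`.
-/

open Equiv Equiv.Perm

section CycleType

variable {ι κ : Type*} [Fintype ι] [DecidableEq ι] [Fintype κ] [DecidableEq κ]

theorem cycleType_permCongr (e : ι ≃ κ) (s : Perm ι) :
    (e.permCongr s).cycleType = s.cycleType := by
  rw [← cycleType_extendDomain (e.trans (Equiv.Set.univ κ).symm) (g := s)]
  congr 1

theorem cycleType_viaFintypeEmbedding (s : Perm ι) (f : ι ↪ κ) :
    (s.viaFintypeEmbedding f).cycleType = s.cycleType :=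
  cycleType_extendDomain f.toEquivRange

theorem cycleType_sumCongr (s : Perm ι) (t : Perm κ) :
    (Perm.sumCongr s t).cycleType = s.cycleType + t.cycleType := by
  have hs : Perm.sumCongr s (1 : Perm κ) = s.viaFintypeEmbedding Function.Embedding.inl := by
    ext (x | x)
    · exact (viaFintypeEmbedding_apply_image s Function.Embedding.inl x).symm
    · exact (viaFintypeEmbedding_apply_notMem_range s Function.Embedding.inl (by simp)).symm
  have ht : Perm.sumCongr (1 : Perm ι) t = t.viaFintypeEmbedding Function.Embedding.inr := by
    ext (x | x)
    · exact (viaFintypeEmbedding_apply_notMem_range t Function.Embedding.inr (by simp)).symm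
    · exact (viaFintypeEmbedding_apply_image t Function.Embedding.inr x).symm
  have hdisj : (Perm.sumCongr s (1 : Perm κ)).Disjoint (Perm.sumCongr (1 : Perm ι) t) := by
    rintro (x | x) <;> simp
  calc (Perm.sumCongr s t).cycleType
      = (Perm.sumCongr s 1 * Perm.sumCongr 1 t).cycleType := by
        rw [sumCongr_mul, mul_one, one_mul]
    _ = s.cycleType + t.cycleType := by
        rw [hdisj.cycleType_mul, hs, ht, cycleType_viaFintypeEmbedding,
          cycleType_viaFintypeEmbedding]

theorem mem_cycleType_iff_exists_card_support_cycleOf {s : Perm ι} {p : ℕ} :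
    p ∈ s.cycleType ↔ ∃ x, s x ≠ x ∧ (s.cycleOf x).support.card = p := by
  simp only [cycleType_def, Multiset.mem_map, Finset.mem_val, Function.comp_apply]
  constructor
  · rintro ⟨c, hc, rfl⟩
    obtain ⟨x, hx⟩ := (mem_cycleFactorsFinset_iff.1 hc).1.nonempty_support
    exact ⟨x, mem_support.1 (mem_cycleFactorsFinset_support_le hc hx),
      by rw [← cycle_is_cycleOf hx hc]⟩
  · rintro ⟨x, hx, rfl⟩
    exact ⟨s.cycleOf x, cycleOf_mem_cycleFactorsFinset_iff.2 (mem_support.2 hx), rfl⟩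

theorem forall_mem_cycleType_three_le_iff {s : Perm ι} :
    (∀ p ∈ s.cycleType, 3 ≤ p) ↔ ∀ x, s x ≠ x → s (s x) ≠ x := by
  have hcard : ∀ x, s x ≠ x → (3 ≤ (s.cycleOf x).support.card ↔ s (s x) ≠ x) := fun x hx => by
    have hdvd : s (s x) = x ↔ (s.cycleOf x).support.card ∣ 2 :=
      (s.isCycleOn_support_cycleOf x).pow_apply_eq (n := 2)
        (mem_support_cycleOf_iff.2 ⟨SameCycle.rfl, mem_support.2 hx⟩)
    have htwo := two_le_card_support_cycleOf_iff.2 hx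
    rw [Ne, hdvd, Nat.dvd_prime Nat.prime_two]
    omega
  simp only [mem_cycleType_iff_exists_card_support_cycleOf]
  grind

theorem sum_cycleType_eq_card_iff {s : Perm ι} :
    s.cycleType.sum = Fintype.card ι ↔ ∀ x, s x ≠ x := by
  simp [sum_cycleType, Finset.card_eq_iff_eq_univ, Finset.eq_univ_iff_forall]

theorem forall_apply_ne_and_apply_apply_ne_iff {s : Perm ι} :
    (∀ x, s x ≠ x ∧ s (s x) ≠ x) ↔
      (∀ p ∈ s.cycleType, 3 ≤ p) ∧ s.cycleType.sum = Fintype.card ι := by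
  rw [forall_mem_cycleType_three_le_iff, sum_cycleType_eq_card_iff]
  grind

end CycleType

section Permanent

variable {R : Type*} [CommSemiring R]

theorem permanent_submatrix_equiv_self {m n : Type*} [DecidableEq m] [Fintype m] [DecidableEq n]
    [Fintype n] (e : n ≃ m) (A : Matrix m m R) :
    (A.submatrix e e).permanent = A.permanent :=
  Fintype.sum_equiv e.permCongr _ _ fun σ => Fintype.prod_equiv e _ _ fun i => by simp

theorem permanent_fromBlocks_zero₂₁ {m n : Type*} [DecidableEq m] [Fintype m] [DecidableEq n]
    [Fintype n] (A : Matrix m m R) (B : Matrix m n R) (D : Matrix n n R) :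
    (fromBlocks A B 0 D).permanent = A.permanent * D.permanent := by
  simp only [permanent]
  rw [Finset.sum_mul_sum, ← Finset.sum_product', Finset.univ_product_univ]
  symm
  refine Finset.sum_of_injOn (sumCongrHom m n) sumCongrHom_injective.injOn (by simp) ?_ ?_
  · intro σ _ hσ
    obtain ⟨i, j, hij⟩ : ∃ i j, σ (Sum.inl i) = Sum.inr j := by
      by_contra! hinl
      obtain ⟨στ, rfl⟩ := mem_sumCongrHom_range_of_perm_mapsTo_inl (σ := σ) <| by
        rintro _ ⟨i, rfl⟩
        cases hi : σ (Sum.inl i) with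
        | inl k => exact ⟨k, rfl⟩
        | inr j => exact absurd hi (hinl i j)
      exact hσ ⟨στ, by simp, rfl⟩
    exact Finset.prod_eq_zero (Finset.mem_univ (Sum.inl i)) (by simp [hij])
  · rintro ⟨σ, τ⟩ _
    simp [Fintype.prod_sum_type]

theorem exists_lt_apply_of_ne_one {m : Type*} [LinearOrder m] [WellFoundedLT m] {σ : Perm m}
    (hσ : σ ≠ 1) : ∃ i, i < σ i := by
  have hmoved : {i | σ i ≠ i}.Nonempty := by
    by_contra! hfix
    exact hσ (Equiv.ext fun i => not_not.1 (Set.eq_empty_iff_forall_notMem.1 hfix i))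
  obtain ⟨i, hi, hmin⟩ := wellFounded_lt.has_min _ hmoved
  exact ⟨i, lt_of_le_of_ne (not_lt.1 (hmin (σ i) (σ.injective.ne hi))) hi.symm⟩

theorem permanent_of_isUpperTriangular {m : Type*} [LinearOrder m] [Fintype m] {A : Matrix m m R}
    (hA : A.IsUpperTriangular) : A.permanent = ∏ i, A i i := by
  rw [permanent, Finset.sum_eq_single 1]
  · rfl
  · intro σ _ hσ
    obtain ⟨i, hi⟩ := exists_lt_apply_of_ne_one hσ
    exact Finset.prod_eq_zero (Finset.mem_univ i) (hA hi)
  · simp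

theorem permanent_of_isLowerTriangular {m : Type*} [LinearOrder m] [Fintype m] {A : Matrix m m R}
    (hA : A.IsLowerTriangular) : A.permanent = ∏ i, A i i := by
  rw [← permanent_transpose]
  exact permanent_of_isUpperTriangular fun _ _ hij => hA hij

theorem permanent_succ_column_zero {n : ℕ} (A : Matrix (Fin (n + 1)) (Fin (n + 1)) R) :
    A.permanent = ∑ i, A i 0 * (A.submatrix i.succAbove Fin.succ).permanent := by
  rw [permanent, Finset.univ_perm_fin_succ, ← Finset.univ_product_univ, Finset.sum_map,
    Finset.sum_product]
  refine Finset.sum_congr rfl fun i _ => ?_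
  simp only [Equiv.toEmbedding_apply, Fin.prod_univ_succ, decomposeFin_symm_apply_zero,
    decomposeFin_symm_apply_succ, ← Finset.mul_sum]
  congr 1
  cases i using Fin.cases with
  | zero => simp [permanent]
  | succ i =>
    -- `decomposeFin` swaps rows `0` and `i.succ`, so it lists the remaining rows in an order that
    -- differs from that of `i.succ.succAbove` by the cycle `i.cycleRange`.
    rw [← permanent_permute_cols i.cycleRange]
    simp [permanent, Fin.succAbove_cycleRange]

theorem permanent_succ_row_zero {n : ℕ} (A : Matrix (Fin (n + 1)) (Fin (n + 1)) R) :
    A.permanent = ∑ j, A 0 j * (A.submatrix Fin.succ j.succAbove).permanent := by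
  rw [← permanent_transpose, permanent_succ_column_zero]
  refine Finset.sum_congr rfl fun i _ => ?_
  rw [← permanent_transpose, transpose_submatrix, transpose_transpose, transpose_apply]

theorem permanent_eq_add_of_forall_castSucc_succ_eq_zero {n : ℕ}
    (A : Matrix (Fin (n + 2)) (Fin (n + 2)) R)
    (hA : ∀ i : Fin n, A i.castSucc.succ 0 = 0) :
    A.permanent = A 0 0 * (A.submatrix Fin.succ Fin.succ).permanent +
      A (Fin.last (n + 1)) 0 * (A.submatrix Fin.castSucc Fin.succ).permanent := by
  rw [permanent_succ_column_zero, Fin.sum_univ_succ, Fin.sum_univ_castSucc]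
  simp only [hA, zero_mul, Finset.sum_const_zero, zero_add, Fin.succAbove_zero, Fin.succ_last,
    Fin.succAbove_last]

end Permanent

section TridiagonalToeplitz

variable {R : Type*} [CommSemiring R] (α β γ : R)

/-- The `n × n` Toeplitz matrix with `α` on the subdiagonal, `β` on the diagonal and `γ` on the
superdiagonal. -/
def tridiagonalToeplitz (n : ℕ) : Matrix (Fin n) (Fin n) R :=
  of fun i j => (if (i : ℕ) = j + 1 then α else 0) + (if (i : ℕ) = j then β else 0) +
    (if (j : ℕ) = i + 1 then γ else 0)

theorem tridiagonalToeplitz_apply {n : ℕ} (i j : Fin n) :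
    tridiagonalToeplitz α β γ n i j = (if (i : ℕ) = j + 1 then α else 0) +
      (if (i : ℕ) = j then β else 0) + (if (j : ℕ) = i + 1 then γ else 0) :=
  rfl

theorem tridiagonalToeplitz_submatrix_succ_succ (n : ℕ) :
    (tridiagonalToeplitz α β γ (n + 1)).submatrix Fin.succ Fin.succ =
      tridiagonalToeplitz α β γ n := by
  ext i j
  simp [tridiagonalToeplitz_apply]

theorem permanent_tridiagonalToeplitz_zero : (tridiagonalToeplitz α β γ 0).permanent = 1 :=
  permanent_isEmpty

theorem permanent_tridiagonalToeplitz_one : (tridiagonalToeplitz α β γ 1).permanent = β := by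
  simp [tridiagonalToeplitz_apply]

theorem permanent_tridiagonalToeplitz_add_two (n : ℕ) :
    (tridiagonalToeplitz α β γ (n + 2)).permanent =
      β * (tridiagonalToeplitz α β γ (n + 1)).permanent +
        α * γ * (tridiagonalToeplitz α β γ n).permanent := by
  have hminor : ((tridiagonalToeplitz α β γ (n + 2)).submatrix Fin.succ
      (Fin.succAbove 1)).permanent = α * (tridiagonalToeplitz α β γ n).permanent := by
    have hsub : ((tridiagonalToeplitz α β γ (n + 2)).submatrix Fin.succ
        (Fin.succAbove 1)).submatrix Fin.succ Fin.succ = tridiagonalToeplitz α β γ n := by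
      ext i j
      simp [tridiagonalToeplitz_apply]
    rw [permanent_succ_column_zero, Fin.sum_univ_succ, Fin.succAbove_zero, hsub]
    simp [tridiagonalToeplitz_apply]
  rw [permanent_succ_row_zero, Fin.sum_univ_succ, Fin.sum_univ_succ, Fin.succAbove_zero,
    tridiagonalToeplitz_submatrix_succ_succ, Fin.succ_zero_eq_one, hminor]
  simp [tridiagonalToeplitz_apply, mul_left_comm γ α, mul_assoc]

end TridiagonalToeplitz

section PermTrinomial

variable {R ι κ : Type*} [CommSemiring R] [DecidableEq ι] [DecidableEq κ] (α β γ : R)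

/-- The Laurent trinomial `α·S⁻¹ + β·1 + γ·S` in the permutation matrix `S` of `s`. For `s` without
cycles of length at most `2` these are the elements of `Λ̂_n(α,β,γ)`. -/
def permTrinomial (s : Perm ι) : Matrix ι ι R :=
  α • s⁻¹.permMatrix R + β • (1 : Matrix ι ι R) + γ • s.permMatrix R

theorem permTrinomial_apply (s : Perm ι) (i j : ι) :
    permTrinomial α β γ s i j = (if s j = i then α else 0) + (if i = j then β else 0) +
      (if s i = j then γ else 0) := by
  simp [permTrinomial, Perm.permMatrix, PEquiv.toMatrix_apply, Matrix.one_apply,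
    Equiv.symm_apply_eq, eq_comm (a := i) (b := s j)]

theorem permTrinomial_permCongr (e : ι ≃ κ) (s : Perm ι) :
    (permTrinomial α β γ (e.permCongr s)).submatrix e e = permTrinomial α β γ s := by
  ext i j
  simp [permTrinomial_apply]

theorem permTrinomial_sumCongr (s : Perm ι) (t : Perm κ) :
    permTrinomial α β γ (Perm.sumCongr s t) =
      fromBlocks (permTrinomial α β γ s) 0 0 (permTrinomial α β γ t) := by
  ext (i | i) (j | j) <;> simp [permTrinomial_apply]

variable [Fintype ι] [Fintype κ]

theorem permanent_permTrinomial_sumCongr (s : Perm ι) (t : Perm κ) :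
    (permTrinomial α β γ (Perm.sumCongr s t)).permanent =
      (permTrinomial α β γ s).permanent * (permTrinomial α β γ t).permanent := by
  rw [permTrinomial_sumCongr, permanent_fromBlocks_zero₂₁]

theorem permanent_permTrinomial_permCongr (e : ι ≃ κ) (s : Perm ι) :
    (permTrinomial α β γ (e.permCongr s)).permanent = (permTrinomial α β γ s).permanent := by
  rw [← permTrinomial_permCongr α β γ e s, permanent_submatrix_equiv_self]

theorem permanent_permTrinomial_congr {s : Perm ι} {t : Perm κ}
    (hcard : Fintype.card ι = Fintype.card κ) (hst : s.cycleType = t.cycleType) :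
    (permTrinomial α β γ s).permanent = (permTrinomial α β γ t).permanent := by
  let e : ι ≃ κ := Fintype.equivOfCardEq hcard
  obtain ⟨c, hc⟩ : ∃ c, c * e.permCongr s * c⁻¹ = t :=
    isConj_iff.1 (isConj_iff_cycleType_eq.2 (by rw [cycleType_permCongr, hst]))
  rw [← hc, ← permCongr_eq_mul,
    permanent_permTrinomial_permCongr, permanent_permTrinomial_permCongr]

theorem permanent_permTrinomial_eq_prod_cycleType {s : Perm ι} (hs : ∀ x, s x ≠ x) :
    (permTrinomial α β γ s).permanent =
      (s.cycleType.map fun p => (permTrinomial α β γ (finRotate p)).permanent).prod := by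
  suffices hfin : ∀ (L : Multiset ℕ) (t : Perm (Fin L.sum)), t.cycleType = L →
      (permTrinomial α β γ t).permanent =
        (L.map fun p => (permTrinomial α β γ (finRotate p)).permanent).prod by
    have hsum := sum_cycleType_eq_card_iff.2 hs
    let e : ι ≃ Fin s.cycleType.sum := Fintype.equivFinOfCardEq hsum.symm
    rw [← permanent_permTrinomial_permCongr α β γ e, hfin _ _ (cycleType_permCongr e s)]
  intro L
  induction L using Multiset.induction_on with
  | empty =>
    have : IsEmpty (Fin (0 : Multiset ℕ).sum) := Fin.isEmpty
    exact fun _ _ => permanent_isEmpty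
  | cons p L ih =>
    intro t ht
    have htwo : ∀ q ∈ p ::ₘ L, 2 ≤ q := fun q hq => two_le_of_mem_cycleType (ht ▸ hq)
    obtain ⟨u, hu⟩ := (exists_with_cycleType_iff (Fin L.sum)).2
      ⟨(Fintype.card_fin _).ge, fun q hq => htwo q (Multiset.mem_cons_of_mem hq)⟩
    have htu : t.cycleType = (Perm.sumCongr (finRotate p) u).cycleType := by
      rw [cycleType_sumCongr, cycleType_finRotate_of_le (htwo p (Multiset.mem_cons_self p L)), hu,
        Multiset.singleton_add, ht]
    rw [permanent_permTrinomial_congr α β γ (by simp) htu, permanent_permTrinomial_sumCongr,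
      ih u hu, Multiset.map_cons, Multiset.prod_cons]

end PermTrinomial

section FinRotate

variable {R : Type*} [CommSemiring R] (α β γ : R)

theorem finRotate_succ_eq_iff {n : ℕ} {i j : Fin (n + 1)} :
    finRotate (n + 1) i = j ↔ (j : ℕ) = i + 1 ∨ (i : ℕ) = n ∧ (j : ℕ) = 0 := by
  rw [Fin.ext_iff, coe_finRotate]
  simp only [Fin.ext_iff, Fin.val_last]
  grind

theorem permTrinomial_finRotate_apply {n : ℕ} (i j : Fin (n + 1)) :
    permTrinomial α β γ (finRotate (n + 1)) i j =
      (if (i : ℕ) = j + 1 ∨ (j : ℕ) = n ∧ (i : ℕ) = 0 then α else 0) +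
        (if (i : ℕ) = j then β else 0) +
        (if (j : ℕ) = i + 1 ∨ (i : ℕ) = n ∧ (j : ℕ) = 0 then γ else 0) := by
  simp only [permTrinomial_apply, finRotate_succ_eq_iff, Fin.val_inj]

theorem permTrinomial_finRotate_apply_eq_zero {n : ℕ} {i j : Fin (n + 1)}
    (hij : (i : ℕ) + 1 < j ∧ (j : ℕ) < i + n ∨ (j : ℕ) + 1 < i ∧ (i : ℕ) < j + n) :
    permTrinomial α β γ (finRotate (n + 1)) i j = 0 := by
  rw [permTrinomial_finRotate_apply, if_neg (by lia), if_neg (by lia), if_neg (by lia), add_zero,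
    add_zero]

theorem permTrinomial_finRotate_submatrix_succ_succ (n : ℕ) :
    (permTrinomial α β γ (finRotate (n + 1))).submatrix Fin.succ Fin.succ =
      tridiagonalToeplitz α β γ n := by
  ext i j
  simp [permTrinomial_finRotate_apply, tridiagonalToeplitz_apply]

theorem permanent_permTrinomial_finRotate_minor_one (m : ℕ) :
    ((permTrinomial α β γ (finRotate (m + 3))).submatrix Fin.succ (Fin.succAbove 1)).permanent =
      α * (tridiagonalToeplitz α β γ (m + 1)).permanent + γ ^ (m + 2) := by
  set A := (permTrinomial α β γ (finRotate (m + 3))).submatrix Fin.succ (Fin.succAbove 1) with hA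
  have htoeplitz : A.submatrix Fin.succ Fin.succ = tridiagonalToeplitz α β γ (m + 1) := by
    ext i j
    simp [hA, permTrinomial_finRotate_apply, tridiagonalToeplitz_apply]
  have htriangular : (A.submatrix Fin.castSucc Fin.succ).permanent = γ ^ (m + 1) := by
    rw [permanent_of_isLowerTriangular]
    · simp [hA, permTrinomial_finRotate_apply]
    · intro i j hij
      have : (i : ℕ) < j := hij
      refine permTrinomial_finRotate_apply_eq_zero α β γ ?_
      simp only [Fin.val_succ, Fin.val_castSucc, Fin.one_succAbove_succ]
      lia
  rw [permanent_eq_add_of_forall_castSucc_succ_eq_zero, htoeplitz, htriangular, pow_succ' γ (m + 1)]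
  · simp [hA, permTrinomial_finRotate_apply]
  · intro i
    refine permTrinomial_finRotate_apply_eq_zero α β γ ?_
    simp only [Fin.val_succ, Fin.val_castSucc, Fin.val_zero, Fin.one_succAbove_zero]
    lia

theorem permanent_permTrinomial_finRotate_minor_last (m : ℕ) :
    ((permTrinomial α β γ (finRotate (m + 3))).submatrix Fin.succ Fin.castSucc).permanent =
      γ * (tridiagonalToeplitz α β γ (m + 1)).permanent + α ^ (m + 2) := by
  set A := (permTrinomial α β γ (finRotate (m + 3))).submatrix Fin.succ Fin.castSucc with hA
  have htoeplitz : A.submatrix Fin.castSucc Fin.succ = tridiagonalToeplitz α β γ (m + 1) := by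
    ext i j
    simp [hA, permTrinomial_finRotate_apply, tridiagonalToeplitz_apply, i.isLt.ne, j.isLt.ne]
  have htriangular : (A.submatrix Fin.succ Fin.succ).permanent = α ^ (m + 1) := by
    rw [permanent_of_isUpperTriangular]
    · simp [hA, permTrinomial_finRotate_apply]
    · intro i j hij
      have : (j : ℕ) < i := hij
      refine permTrinomial_finRotate_apply_eq_zero α β γ ?_
      simp only [Fin.val_succ, Fin.val_castSucc]
      lia
  rw [permanent_eq_add_of_forall_castSucc_succ_eq_zero, htoeplitz, htriangular,
    pow_succ' α (m + 1), add_comm]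
  · simp [hA, permTrinomial_finRotate_apply]
  · intro i
    refine permTrinomial_finRotate_apply_eq_zero α β γ ?_
    simp only [Fin.val_succ, Fin.val_castSucc, Fin.val_zero]
    lia

theorem permanent_permTrinomial_finRotate (m : ℕ) :
    (permTrinomial α β γ (finRotate (m + 3))).permanent =
      β * (tridiagonalToeplitz α β γ (m + 2)).permanent +
        2 * α * γ * (tridiagonalToeplitz α β γ (m + 1)).permanent + α ^ (m + 3) + γ ^ (m + 3) := by
  have hrow : ∀ j : Fin m, permTrinomial α β γ (finRotate (m + 3)) 0 j.castSucc.succ.succ = 0 := by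
    intro j
    refine permTrinomial_finRotate_apply_eq_zero α β γ ?_
    simp only [Fin.val_succ, Fin.val_castSucc, Fin.val_zero]
    lia
  calc (permTrinomial α β γ (finRotate (m + 3))).permanent
      = β * (tridiagonalToeplitz α β γ (m + 2)).permanent +
          (γ * (α * (tridiagonalToeplitz α β γ (m + 1)).permanent + γ ^ (m + 2)) +
            α * (γ * (tridiagonalToeplitz α β γ (m + 1)).permanent + α ^ (m + 2))) := by
        rw [permanent_succ_row_zero, Fin.sum_univ_succ, Fin.sum_univ_succ, Fin.sum_univ_castSucc]
        simp only [hrow, zero_mul, Finset.sum_const_zero, zero_add, Fin.succAbove_zero,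
          Fin.succ_last, Fin.succAbove_last, Fin.succ_zero_eq_one,
          permTrinomial_finRotate_submatrix_succ_succ,
          permanent_permTrinomial_finRotate_minor_one,
          permanent_permTrinomial_finRotate_minor_last]
        simp [permTrinomial_finRotate_apply]
    _ = _ := by ring

end FinRotate

theorem eq_permanent_permTrinomial_finRotate {R : Type*} [CommRing R] {α β γ : R} {a : ℕ → R}
    (ha3 : a 3 = α ^ 3 + β ^ 3 + γ ^ 3 + 3 * α * β * γ)
    (ha4 : a 4 = α ^ 4 + β ^ 4 + γ ^ 4 + 4 * α * β ^ 2 * γ + 2 * α ^ 2 * γ ^ 2)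
    (ha : ∀ m : ℕ, 5 ≤ m → a m = β * a (m - 1) + α * γ * a (m - 2) +
      α ^ (m - 1) * (α - β - γ) + γ ^ (m - 1) * (γ - β - α)) {p : ℕ} (hp : 3 ≤ p) :
    a p = (permTrinomial α β γ (finRotate p)).permanent := by
  obtain ⟨m, rfl⟩ := Nat.exists_eq_add_of_le' hp
  have htoeplitz := permanent_tridiagonalToeplitz_add_two α β γ
  induction m using Nat.twoStepInduction with
  | zero =>
    rw [permanent_permTrinomial_finRotate, ha3, htoeplitz 0, permanent_tridiagonalToeplitz_one,
      permanent_tridiagonalToeplitz_zero]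
    ring
  | one =>
    rw [permanent_permTrinomial_finRotate, ha4, htoeplitz 1, htoeplitz 0,
      permanent_tridiagonalToeplitz_one, permanent_tridiagonalToeplitz_zero]
    ring
  | more m ih₀ ih₁ =>
    have hrec : a (m + 5) = β * a (m + 4) + α * γ * a (m + 3) + α ^ (m + 4) * (α - β - γ) +
        γ ^ (m + 4) * (γ - β - α) := ha (m + 5) (by lia)
    rw [hrec, ih₀ (by lia), ih₁ (by lia)]
    simp only [permanent_permTrinomial_finRotate]
    rw [htoeplitz (m + 2), htoeplitz (m + 1)]
    ring

theorem stmt_1_general {R ι : Type*} [CommRing R] [Fintype ι] [DecidableEq ι] (α β γ : R)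
    (a : ℕ → R) (ha3 : a 3 = α ^ 3 + β ^ 3 + γ ^ 3 + 3 * α * β * γ)
    (ha4 : a 4 = α ^ 4 + β ^ 4 + γ ^ 4 + 4 * α * β ^ 2 * γ + 2 * α ^ 2 * γ ^ 2)
    (ha : ∀ m : ℕ, 5 ≤ m → a m = β * a (m - 1) + α * γ * a (m - 2) +
      α ^ (m - 1) * (α - β - γ) + γ ^ (m - 1) * (γ - β - α)) :
    {x : R | ∃ s : Perm ι, (∀ i, s i ≠ i ∧ s (s i) ≠ i) ∧
      (permTrinomial α β γ s).permanent = x} =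
      {x : R | ∃ L : Multiset ℕ, (∀ p ∈ L, 3 ≤ p) ∧ L.sum = Fintype.card ι ∧
        (L.map a).prod = x} := by
  have hprod : ∀ s : Perm ι, (∀ i, s i ≠ i ∧ s (s i) ≠ i) →
      (permTrinomial α β γ s).permanent = (s.cycleType.map a).prod := by
    intro s hs
    have hthree := (forall_apply_ne_and_apply_apply_ne_iff.1 hs).1
    rw [permanent_permTrinomial_eq_prod_cycleType α β γ fun i => (hs i).1]
    exact congrArg Multiset.prod <| Multiset.map_congr rfl fun p hp =>
      (eq_permanent_permTrinomial_finRotate ha3 ha4 ha (hthree p hp)).symm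
  ext x
  constructor
  · rintro ⟨s, hs, rfl⟩
    obtain ⟨hthree, hsum⟩ := forall_apply_ne_and_apply_apply_ne_iff.1 hs
    exact ⟨s.cycleType, hthree, hsum, (hprod s hs).symm⟩
  · rintro ⟨L, hthree, hsum, rfl⟩
    obtain ⟨s, rfl⟩ := (exists_with_cycleType_iff ι).2
      ⟨hsum.le, fun p hp => (Nat.le_succ 2).trans (hthree p hp)⟩
    have hs := forall_apply_ne_and_apply_apply_ne_iff.2 ⟨hthree, hsum⟩
    exact ⟨s, hs, hprod s hs⟩

theorem stmt_1 (α β γ : ℝ) (n : ℕ) (hn : 3 ≤ n) (a : ℕ → ℝ)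
    (ha3 : a 3 = α ^ 3 + β ^ 3 + γ ^ 3 + 3 * α * β * γ)
    (ha4 : a 4 = α ^ 4 + β ^ 4 + γ ^ 4 + 4 * α * β ^ 2 * γ + 2 * α ^ 2 * γ ^ 2)
    (ha : ∀ m : ℕ, 5 ≤ m → a m = β * a (m - 1) + α * γ * a (m - 2) +
      α ^ (m - 1) * (α - β - γ) + γ ^ (m - 1) * (γ - β - α)) :
    {x : ℝ | ∃ A ∈ LambdaHat n α β γ, A.permanent = x} =
      {x : ℝ | ∃ L : Multiset ℕ, (∀ p ∈ L, 3 ≤ p) ∧ L.sum = n ∧ (L.map a).prod = x} := by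
  simpa [LambdaHat, permTrinomial, and_assoc] using
    stmt_1_general (ι := Fin n) α β γ a ha3 ha4 ha
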